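/- Let (R, m) be a Noetherian local ring and M a finitely generated R-module of dimension d, and let x = x_1, ..., x_d be a system of parameters of M. Then the intersection over all n > 0 of the limit closures (x_1^n, ..., x_d^n)^lim_M equals the unmixed component U_M(0) of M. -/

import Mathlib

/-!
A submodule `V` of dimension less than `d` lies in every limit closure because in `R / Ann V` any
`d` elements satisfy a monomial relation `(a₁⋯a_d) ^ k ∈ (a₁ ^ (k + 1), …, a_d ^ (k + 1))`.

Conversely, `m` lies in the limit closure of `x₁ ^ k, …, x_d ^ k` if and only if the class of
`m / (x₁⋯x_d) ^ k` in the top Čech cohomology of `M` vanishes. The intersection `N` of these limit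
closures has dimension less than `d` by induction on the length of the sequence `a, l`:

* The Čech complex of `a, l` is the cone of `K → K_a`, where `K` is the Čech complex of `l`. Its
  cohomology with coefficients in `M` is `a`-power torsion, so it is Artinian by Melkersson's
  criterion once this is known for coefficients killed by `a`, for which `K_a` contributes nothing.
* The `a`-power torsion of the cohomology for `l` lifts to the Artinian cohomology for `a, l`. By
  the descending chain condition there is `c` such that `a ^ c` makes all `a`-power torsion classes
  divisible by every power of `a`. Hence the image of `Q = a ^ c N` in `M / a ^ n M` lies in all
  limit closures for `l`, whatever `n` is.
* For large `n`, this image surjects onto `Q / aQ` by Artin–Rees. The induction hypothesis bounds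
  its dimension, hence that of `Q`, and `Supp N ⊆ Supp Q ∪ Supp (M / aM)` bounds the dimension of
  `N`.
-/

open IsLocalRing

/-- The limit closure `(x)^lim_M = ⋃_{n>0} ((x₁^{n+1}, …, x_r^{n+1})M :_M (x₁⋯x_r)^n)` of a
sequence `x = x₁, …, x_r` of elements of `R` in the module `M`; the union of the increasing
family of submodules is expressed as a supremum. -/
def limitClosure {R : Type*} [CommRing R] {M : Type*} [AddCommGroup M] [Module R M]
    {r : ℕ} (x : Fin r → R) : Submodule R M :=
  ⨆ n : ℕ, (Ideal.span (Set.range fun i => x i ^ (n + 2)) • (⊤ : Submodule R M)).comap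
    (LinearMap.lsmul R M ((∏ i, x i) ^ (n + 1)))

/-- The dimension of a module `M`: the Krull dimension of `R ⧸ Ann M`. -/
noncomputable def moduleDim (R M : Type*) [CommRing R] [AddCommGroup M] [Module R M] :
    WithBot ℕ∞ :=
  ringKrullDim (R ⧸ Module.annihilator R M)

/-- A system of parameters of a `d`-dimensional module `M` over a Noetherian local ring:
a sequence of `d` elements of the maximal ideal such that `M/(x₁, …, x_d)M` has finite
length. -/
def IsSystemOfParameters {R : Type*} [CommRing R] [IsLocalRing R] (M : Type*)
    [AddCommGroup M] [Module R M] {d : ℕ} (x : Fin d → R) : Prop :=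
  (∀ i, x i ∈ maximalIdeal R) ∧
    IsFiniteLength R (M ⧸ (Ideal.span (Set.range x) • (⊤ : Submodule R M)))

universe u v

open TensorProduct

section Monomials

variable {R : Type*} [CommRing R] {M : Type*} [AddCommGroup M] [Module R M]

/-- The ideal `(a₁ ^ k, …, a_r ^ k)` attached to the list `l = [a₁, …, a_r]`. -/
def powIdeal (l : List R) (k : ℕ) : Ideal R :=
  Ideal.ofList (l.map (· ^ k))

@[simp]
lemma powIdeal_nil (k : ℕ) : powIdeal ([] : List R) k = ⊥ := by
  simp [powIdeal]

@[simp]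
lemma powIdeal_one (l : List R) : powIdeal l 1 = Ideal.ofList l := by
  simp [powIdeal]

lemma powIdeal_cons (a : R) (l : List R) (k : ℕ) :
    powIdeal (a :: l) k = Ideal.span {a ^ k} ⊔ powIdeal l k := by
  simp [powIdeal, Ideal.ofList_cons]

lemma powIdeal_le_iff {l : List R} {k : ℕ} {I : Ideal R} :
    powIdeal l k ≤ I ↔ ∀ b ∈ l, b ^ k ∈ I := by
  simp [powIdeal, Ideal.ofList, Ideal.span_le, Set.subset_def]

lemma pow_mem_powIdeal {l : List R} {b : R} (hb : b ∈ l) (k : ℕ) : b ^ k ∈ powIdeal l k :=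
  powIdeal_le_iff.1 le_rfl b hb

lemma powIdeal_antitone (l : List R) : Antitone (powIdeal l) := fun _ _ hjk =>
  powIdeal_le_iff.2 fun _ hb =>
    Ideal.mem_of_dvd _ (pow_dvd_pow _ hjk) (pow_mem_powIdeal hb _)

lemma map_powIdeal {A : Type*} [CommRing A] (φ : R →+* A) (l : List R) (k : ℕ) :
    (powIdeal l k).map φ = powIdeal (l.map φ) k := by
  simp [powIdeal, Ideal.map_ofList, List.map_map, Function.comp_def]

lemma prod_pow_mul_mem_powIdeal {l : List R} {k : ℕ} {r : R} (hr : r ∈ powIdeal l k) (s : ℕ) :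
    l.prod ^ s * r ∈ powIdeal l (k + s) := by
  suffices h : powIdeal l k ≤
      Submodule.comap (LinearMap.mulLeft R (l.prod ^ s)) (powIdeal l (k + s)) from h hr
  refine powIdeal_le_iff.2 fun b hb => ?_
  obtain ⟨c, hc⟩ := List.dvd_prod hb
  have hfactor : l.prod ^ s * b ^ k = c ^ s * b ^ (k + s) := by rw [hc]; ring
  change l.prod ^ s * b ^ k ∈ powIdeal l (k + s)
  exact hfactor ▸ Ideal.mul_mem_left _ _ (pow_mem_powIdeal hb _)

lemma prod_pow_smul_mem_powIdeal_smul_top {l : List R} {k : ℕ} {y : M}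
    (hy : y ∈ powIdeal l k • (⊤ : Submodule R M)) (s : ℕ) :
    l.prod ^ s • y ∈ powIdeal l (k + s) • (⊤ : Submodule R M) := by
  induction hy using Submodule.smul_induction_on' with
  | smul r hr n hn =>
    rw [smul_smul]
    exact Submodule.smul_mem_smul (prod_pow_mul_mem_powIdeal hr s) hn
  | add x _ y _ hx hy => rw [smul_add]; exact add_mem hx hy

/-- Membership of `m` in the limit closure of `a₁ ^ k, …, a_r ^ k`, where `l = [a₁, …, a_r]`,
expressed by exponents that need not be multiples of `k`. -/
def MemLimClosure (l : List R) (k : ℕ) (m : M) : Prop :=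
  ∃ s : ℕ, l.prod ^ s • m ∈ powIdeal l (k + s) • (⊤ : Submodule R M)

lemma MemLimClosure.mono {l : List R} {j k : ℕ} (hjk : j ≤ k) {m : M} (h : MemLimClosure l k m) :
    MemLimClosure l j m :=
  h.imp fun _ hs => Submodule.smul_mono_left (powIdeal_antitone l (Nat.add_le_add_right hjk _)) hs

@[simp]
lemma memLimClosure_nil {k : ℕ} {m : M} : MemLimClosure ([] : List R) k m ↔ m = 0 := by
  simp [MemLimClosure]

lemma memLimClosure_cons_iff {a : R} {l : List R} {k : ℕ} {m : M} :
    MemLimClosure (a :: l) k m ↔ ∃ (j s : ℕ) (q : M),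
      a ^ j • (l.prod ^ s • m - a ^ k • q) ∈ powIdeal l (k + s) • (⊤ : Submodule R M) := by
  have key : ∀ s : ℕ, (a :: l).prod ^ s • m ∈ powIdeal (a :: l) (k + s) • (⊤ : Submodule R M) ↔
      ∃ q : M, a ^ s • (l.prod ^ s • m - a ^ k • q) ∈
        powIdeal l (k + s) • (⊤ : Submodule R M) := by
    intro s
    have hsub : ∀ q : M, a ^ s • (l.prod ^ s • m - a ^ k • q) =
        (a :: l).prod ^ s • m - a ^ (k + s) • q := by
      intro q
      rw [List.prod_cons, mul_pow]
      module
    simp only [hsub, powIdeal_cons, Submodule.sup_smul, Submodule.mem_sup,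
      Submodule.ideal_span_singleton_smul, Submodule.mem_smul_pointwise_iff_exists,
      Submodule.mem_top, true_and]
    constructor
    · rintro ⟨_, ⟨q, rfl⟩, p, hp, hqp⟩
      exact ⟨q, by rwa [← hqp, add_sub_cancel_left]⟩
    · rintro ⟨q, hq⟩
      exact ⟨_, ⟨q, rfl⟩, _, hq, add_sub_cancel _ _⟩
  constructor
  · rintro ⟨s, hs⟩
    obtain ⟨q, hq⟩ := (key s).1 hs
    exact ⟨s, s, q, hq⟩
  · rintro ⟨j, s, q, hq⟩
    refine ⟨s + j, (key _).2 ⟨l.prod ^ j • q, ?_⟩⟩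
    have h := Submodule.smul_mem _ (a ^ s) (prod_pow_smul_mem_powIdeal_smul_top hq j)
    rw [add_assoc] at h
    convert h using 1
    module

end Monomials

section KrullDimension

variable {A : Type*} [CommRing A]

/-- The multiplicative set `{a ^ i * (1 + a * b)}`, whose localization is the upper boundary of `A`
along `a` in the Coquand–Lombardi description of Krull dimension. -/
def boundaryMonoid (a : A) : Submonoid A where
  carrier := {y | ∃ (i : ℕ) (b : A), y = a ^ i * (1 + a * b)}
  one_mem' := ⟨0, 0, by simp⟩
  mul_mem' := by
    rintro _ _ ⟨i, b, rfl⟩ ⟨j, c, rfl⟩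
    exact ⟨i + j, b + c + a * b * c, by ring⟩

lemma exists_lt_of_disjoint_boundaryMonoid {a : A} {p : PrimeSpectrum A}
    (hp : Disjoint (boundaryMonoid a : Set A) p.asIdeal) : ∃ q : PrimeSpectrum A, p < q := by
  have ha : a ∉ p.asIdeal := Set.disjoint_left.1 hp ⟨1, 0, by simp⟩
  have hne : p.asIdeal ⊔ Ideal.span {a} ≠ ⊤ := by
    rw [Ne, Ideal.eq_top_iff_one, Submodule.mem_sup]
    rintro ⟨y, hy, _, hz, hyz⟩
    obtain ⟨c, rfl⟩ := Ideal.mem_span_singleton'.1 hz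
    exact Set.disjoint_left.1 hp ⟨0, -c, by rw [← hyz]; ring⟩ hy
  obtain ⟨m, hm, hle⟩ := Ideal.exists_le_maximal _ hne
  refine ⟨⟨m, hm.isPrime⟩, lt_of_le_of_ne (le_sup_left.trans hle) ?_⟩
  rintro rfl
  exact ha (hle (Ideal.mem_sup_right (Ideal.mem_span_singleton_self a)))

lemma ringKrullDim_localization_boundaryMonoid_lt (a : A) {n : ℕ}
    (h : ringKrullDim A < (n + 1 : ℕ)) :
    ringKrullDim (Localization (boundaryMonoid a)) < n := by
  set B := Localization (boundaryMonoid a)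
  contrapose! h
  obtain ⟨s, hs⟩ := Order.le_krullDim_iff.1 h
  have hcomap : StrictMono (PrimeSpectrum.comap (algebraMap A B)) :=
    Monotone.strictMono_of_injective (fun _ _ hpq _ hx => hpq hx)
      (PrimeSpectrum.localization_comap_injective _ (boundaryMonoid a))
  obtain ⟨q, hq⟩ := exists_lt_of_disjoint_boundaryMonoid (a := a)
    (p := (s.map _ hcomap).last)
    ((IsLocalization.disjoint_under_iff (boundaryMonoid a) B _).2 s.last.2.ne_top)
  exact Order.le_krullDim_iff.2 ⟨(s.map _ hcomap).snoc q hq, by simp [hs]⟩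

lemma exists_prod_pow_mem_powIdeal (l : List A) (h : ringKrullDim A < l.length) :
    ∃ k : ℕ, l.prod ^ k ∈ powIdeal l (1 + k) := by
  induction hn : l.length generalizing A with
  | zero =>
    have : Subsingleton A := by
      by_contra hA
      have := not_subsingleton_iff_nontrivial.1 hA
      exact h.not_ge (by simpa [hn] using ringKrullDim_nonneg_of_nontrivial)
    exact ⟨0, by rw [Subsingleton.elim (l.prod ^ 0) 0]; exact zero_mem _⟩
  | succ n ih =>
    obtain ⟨a, l, rfl⟩ := List.exists_of_length_succ l hn
    let φ := algebraMap A (Localization (boundaryMonoid a))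
    have hlen : l.length = n := by simpa using hn
    obtain ⟨k, hk⟩ := ih (l.map φ)
      (by simpa [hlen] using ringKrullDim_localization_boundaryMonoid_lt a (hn ▸ h))
      (by simpa using hlen)
    rw [← map_powIdeal, ← map_list_prod, ← map_pow] at hk
    obtain ⟨_, ⟨i, b, rfl⟩, hb⟩ :=
      (IsLocalization.algebraMap_mem_map_algebraMap_iff (boundaryMonoid a) _ _ _).1 hk
    have hmem : a ^ k * (l.prod ^ i * (a ^ i * (1 + a * b) * l.prod ^ k)) ∈
        powIdeal l (1 + (k + i)) := by
      rw [← add_assoc]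
      exact Ideal.mul_mem_left _ _ (prod_pow_mul_mem_powIdeal hb i)
    refine ⟨k + i, ?_⟩
    rw [powIdeal_cons, List.prod_cons]
    convert add_mem (Ideal.mem_sup_right hmem) (Ideal.mem_sup_left
      (Ideal.mul_mem_left _ (-b * l.prod ^ (k + i)) (Ideal.mem_span_singleton_self _))) using 1
    ring

lemma memLimClosure_one_of_ringKrullDim_lt {R M : Type*} [CommRing R] [AddCommGroup M]
    [Module R M] {l : List R} {I : Ideal R} (hI : ringKrullDim (R ⧸ I) < l.length) {y : M}
    (hy : ∀ r ∈ I, r • y = 0) : MemLimClosure l 1 y := by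
  obtain ⟨k, hk⟩ := exists_prod_pow_mem_powIdeal (l.map (Ideal.Quotient.mk I)) (by simpa using hI)
  rw [← map_powIdeal, ← map_list_prod, ← map_pow,
    Ideal.mem_map_iff_of_surjective _ Ideal.Quotient.mk_surjective] at hk
  obtain ⟨r, hr, hrk⟩ := hk
  have hry : r • y = l.prod ^ k • y := by
    rw [← sub_eq_zero, ← sub_smul]
    exact hy _ (Ideal.Quotient.eq.1 hrk)
  exact ⟨k, hry ▸ Submodule.smul_mem_smul hr trivial⟩

end KrullDimension

section Artinian

open Pointwise

lemma exists_forall_ge_eq_of_antitone₂ {α : Type*} [PartialOrder α] [WellFoundedLT α]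
    {F : ℕ → ℕ → α} (hleft : ∀ k, Antitone fun n => F n k) (hright : ∀ n, Antitone (F n)) :
    ∃ N, ∀ n ≥ N, ∀ k, F N k = F n k := by
  have hmono : ∀ {n n' k k'}, n ≤ n' → k ≤ k' → F n' k' ≤ F n k := fun hn hk =>
    (hright _ hk).trans (hleft _ hn)
  obtain ⟨K, hK⟩ := WellFoundedLT.antitone_chain_condition (f := fun n => F n n)
    fun _ _ h => hmono h h
  choose J hJ using fun k => WellFoundedLT.antitone_chain_condition (hleft k)
  refine ⟨K + ∑ k ∈ Finset.range K, J k, fun n hn k => (hmono hn le_rfl).antisymm' ?_⟩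
  set N := K + ∑ k ∈ Finset.range K, J k
  have hKN : K ≤ N := Nat.le_add_right _ _
  rcases lt_or_ge k K with hk | hk
  · have hJN : J k ≤ N := (Finset.single_le_sum (fun _ _ => Nat.zero_le _)
      (Finset.mem_range.2 hk)).trans (Nat.le_add_left _ _)
    exact ((hJ k N hJN).symm.trans (hJ k n (hJN.trans hn))).le
  · calc F N k ≤ F K K := hmono hKN hk
      _ = F (max n k) (max n k) := hK _ (hk.trans (le_max_right _ _))
      _ ≤ F n k := hmono (le_max_left _ _) (le_max_right _ _)

variable {R : Type*} [CommRing R]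

lemma le_of_forall_pow_smul_inf_ker_le {T : Type*} [AddCommGroup T] [Module R T] {a : R}
    (htors : ∀ t : T, ∃ k : ℕ, a ^ k • t = 0) {W W' : Submodule R T} (hle : W' ≤ W)
    (h : ∀ k : ℕ, a ^ k • W ⊓ LinearMap.ker (LinearMap.lsmul R T a) ≤ a ^ k • W') : W ≤ W' := by
  suffices key : ∀ k, ∀ w ∈ W, a ^ k • w = 0 → w ∈ W' by
    intro w hw
    obtain ⟨k, hk⟩ := htors w
    exact key k w hw hk
  intro k
  induction k with
  | zero =>
    intro w _ hw
    rw [pow_zero, one_smul] at hw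
    exact hw ▸ zero_mem _
  | succ k ih =>
    intro w hw hwk
    obtain ⟨w', hw', heq⟩ := h k ⟨Submodule.smul_mem_pointwise_smul w _ W hw, by
      rwa [SetLike.mem_coe, LinearMap.mem_ker, LinearMap.lsmul_apply, smul_smul, ← pow_succ']⟩
    have hdiff : w - w' ∈ W' := ih _ (sub_mem hw (hle hw')) (by
      rw [smul_sub, sub_eq_zero]
      exact heq.symm)
    simpa using add_mem hdiff hw'

/-- Melkersson's criterion for the ideal generated by one element. -/
lemma isArtinian_of_isArtinian_ker_lsmul {T : Type*} [AddCommGroup T] [Module R T] {a : R}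
    (htors : ∀ t : T, ∃ k : ℕ, a ^ k • t = 0)
    (hker : IsArtinian R (LinearMap.ker (LinearMap.lsmul R T a))) : IsArtinian R T := by
  rw [← monotone_stabilizes_iff_artinian]
  intro W'
  let W : ℕ → Submodule R T := fun n => OrderDual.ofDual (W' n)
  have hW : Antitone W := fun _ _ h => W'.2 h
  let S := LinearMap.ker (LinearMap.lsmul R T a)
  obtain ⟨N, hN⟩ := exists_forall_ge_eq_of_antitone₂
    (F := fun n k => (a ^ k • W n).comap S.subtype)
    (fun k _ _ hn => Submodule.comap_mono (Submodule.map_mono (hW hn)))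
    (fun n k k' hk => Submodule.comap_mono (by
      rw [← Nat.add_sub_cancel' hk, pow_add, mul_smul]
      exact smul_mono_right _ (Submodule.smul_le_self_of_tower _ _)))
  refine ⟨N, fun n hn => (le_of_forall_pow_smul_inf_ker_le htors (hW hn) fun k t ht => ?_).antisymm
    (hW hn)⟩
  have hmem : (⟨t, ht.2⟩ : S) ∈ (a ^ k • W N).comap S.subtype := ht.1
  rwa [hN n hn k] at hmem

lemma isArtinian_ker_comp {X Y Z : Type*} [AddCommGroup X] [Module R X] [AddCommGroup Y]
    [Module R Y] [AddCommGroup Z] [Module R Z] {f : X →ₗ[R] Y} {g : Y →ₗ[R] Z}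
    (hf : IsArtinian R (LinearMap.ker f)) (hg : IsArtinian R (LinearMap.ker g)) :
    IsArtinian R (LinearMap.ker (g ∘ₗ f)) := by
  refine isArtinian_of_range_eq_ker (Submodule.inclusion (LinearMap.ker_le_ker_comp f g))
    (f.restrict (p := LinearMap.ker (g ∘ₗ f)) (q := LinearMap.ker g) fun _ hx => hx) ?_
  ext ⟨x, hx⟩
  simp only [Submodule.range_inclusion, Submodule.mem_comap, Submodule.subtype_apply,
    LinearMap.mem_ker, Subtype.ext_iff, ZeroMemClass.coe_zero]
  rfl

lemma isArtinian_of_surjective_of_ker_le {X Y Z : Type*} [AddCommGroup X] [Module R X]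
    [AddCommGroup Y] [Module R Y] [AddCommGroup Z] [Module R Z] [IsArtinian R X]
    (f : Y →ₗ[R] X) {g : Y →ₗ[R] Z} (hg : Function.Surjective g)
    (hker : LinearMap.ker f ≤ LinearMap.ker g) : IsArtinian R Z := by
  have : IsArtinian R (Y ⧸ LinearMap.ker f) :=
    isArtinian_of_linearEquiv f.quotKerEquivRange.symm
  refine isArtinian_of_surjective _ ((LinearMap.ker f).liftQ g hker) fun z => ?_
  obtain ⟨y, rfl⟩ := hg z
  exact ⟨Submodule.Quotient.mk y, by simp⟩

end Artinian

section Homology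

variable {R : Type*} [CommRing R] {A B C : Type*} [AddCommGroup A] [Module R A] [AddCommGroup B]
  [Module R B] [AddCommGroup C] [Module R C] {α : A →ₗ[R] A} {β : B →ₗ[R] B} {γ : C →ₗ[R] C}

/-- The homology `ker α / (im α ∩ ker α)` of a module with an ungraded differential `α`. The
intersection makes sense of it before `α² = 0` is known. -/
abbrev DiffHomology (α : A →ₗ[R] A) : Type _ :=
  LinearMap.ker α ⧸ (LinearMap.range α).comap (LinearMap.ker α).subtype

namespace DiffHomology

/-- The homology class of a cycle. -/
def mk (x : A) (hx : α x = 0) : DiffHomology α :=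
  Submodule.Quotient.mk ⟨x, hx⟩

lemma exists_mk_eq (z : DiffHomology α) : ∃ x hx, mk (α := α) x hx = z := by
  obtain ⟨⟨x, hx⟩, rfl⟩ := Submodule.Quotient.mk_surjective _ z
  exact ⟨x, hx, rfl⟩

lemma mk_eq_zero {x : A} {hx : α x = 0} : mk x hx = 0 ↔ ∃ y, α y = x := by
  simp [mk]

lemma mk_eq_mk {x y : A} {hx : α x = 0} {hy : α y = 0} :
    mk x hx = mk y hy ↔ ∃ z, α z = x - y := by
  simp [mk, Submodule.Quotient.eq]

lemma smul_mk (r : R) (x : A) (hx : α x = 0) :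
    r • mk x hx = mk (α := α) (r • x) (by simp [hx]) :=
  rfl

/-- The map induced on homology by a linear map commuting with the differentials. -/
def map (i : A →ₗ[R] B) (hi : ∀ x, β (i x) = i (α x)) : DiffHomology α →ₗ[R] DiffHomology β :=
  Submodule.mapQ _ _ (i.restrict (p := LinearMap.ker α) (q := LinearMap.ker β)
    fun x hx => by simp_all) (by
    rintro ⟨_, _⟩ ⟨y, rfl⟩
    exact ⟨i y, hi y⟩)

lemma map_mk (i : A →ₗ[R] B) (hi : ∀ x, β (i x) = i (α x)) (x : A) (hx : α x = 0) :
    map i hi (mk x hx) = mk (i x) (by rw [hi, hx, map_zero]) :=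
  rfl

/-- The equivalence induced on homology by a linear equivalence commuting with the
differentials. -/
def congr (i : A ≃ₗ[R] B) (hi : ∀ x, β (i x) = i (α x)) : DiffHomology α ≃ₗ[R] DiffHomology β :=
  have hsymm : ∀ y, α (i.symm y) = i.symm (β y) := fun y => by
    rw [LinearEquiv.eq_symm_apply, ← hi, LinearEquiv.apply_symm_apply]
  LinearEquiv.ofLinearMap (map i.toLinearMap hi) (map i.symm.toLinearMap hsymm)
    (LinearMap.ext fun z => by
      obtain ⟨y, hy, rfl⟩ := exists_mk_eq z
      exact mk_eq_mk.2 ⟨0, by simp⟩)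
    (LinearMap.ext fun z => by
      obtain ⟨x, hx, rfl⟩ := exists_mk_eq z
      exact mk_eq_mk.2 ⟨0, by simp⟩)

section ShortExact

variable {i : A →ₗ[R] B} {p : B →ₗ[R] C} (hi : ∀ x, β (i x) = i (α x))
  (hp : ∀ x, γ (p x) = p (β x)) (hβ : ∀ x, β (β x) = 0) (hinj : Function.Injective i)
  (hex : Function.Exact i p) (hsurj : Function.Surjective p)

include hi hβ hinj hex hsurj

lemma isArtinian_ker_map_of_surjective (hA : IsArtinian R (DiffHomology α)) :
    IsArtinian R (LinearMap.ker (map p hp)) := by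
  have hle : LinearMap.ker (map p hp) ≤ LinearMap.range (map i hi) := by
    intro z hz
    obtain ⟨b, hb, rfl⟩ := z.exists_mk_eq
    rw [LinearMap.mem_ker, map_mk, mk_eq_zero] at hz
    obtain ⟨c, hc⟩ := hz
    obtain ⟨b', rfl⟩ := hsurj c
    obtain ⟨a, ha⟩ := (hex (b - β b')).1 (by rw [map_sub, ← hc, hp, sub_self])
    have hαa : α a = 0 := hinj (by rw [← hi, ha, map_sub, hb, hβ, sub_self, map_zero])
    refine ⟨mk a hαa, ?_⟩
    rw [map_mk, mk_eq_mk]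
    exact ⟨-b', by rw [ha, map_neg]; abel⟩
  have : IsArtinian R (LinearMap.range (map i hi)) :=
    isArtinian_of_surjective _ _ (map i hi).surjective_rangeRestrict
  exact isArtinian_of_le hle

include hp

/-- The kernel is the image of the connecting homomorphism, which is presented here by the
correspondence of the pairs `(a, b)` with `i a = β b`. -/
lemma isArtinian_ker_map_of_injective (hC : IsArtinian R (DiffHomology γ)) :
    IsArtinian R (LinearMap.ker (map i hi)) := by
  let P : Submodule R (A × B) := LinearMap.eqLocus (i ∘ₗ LinearMap.fst R A B)
    (β ∘ₗ LinearMap.snd R A B)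
  have hP : ∀ y : P, i y.1.1 = β y.1.2 := fun y => y.2
  have hα : ∀ y : P, α y.1.1 = 0 := fun y => hinj (by rw [← hi, hP, hβ, map_zero])
  have hγ : ∀ y : P, γ (p y.1.2) = 0 := fun y => by rw [hp, ← hP, hex.apply_apply_eq_zero]
  let toC : P →ₗ[R] DiffHomology γ := Submodule.mkQ _ ∘ₗ
    (p ∘ₗ LinearMap.snd R A B ∘ₗ P.subtype).codRestrict (LinearMap.ker γ) hγ
  let toA : P →ₗ[R] LinearMap.ker (map i hi) := (Submodule.mkQ _ ∘ₗ
    (LinearMap.fst R A B ∘ₗ P.subtype).codRestrict (LinearMap.ker α) hα).codRestrict _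
      fun y => mk_eq_zero.2 ⟨_, (hP y).symm⟩
  have htoC : ∀ y, toC y = mk (p y.1.2) (hγ y) := fun _ => rfl
  have htoA : ∀ y, toA y = ⟨mk y.1.1 (hα y), mk_eq_zero.2 ⟨_, (hP y).symm⟩⟩ := fun _ => rfl
  have hsurjA : Function.Surjective toA := by
    rintro ⟨z, hz⟩
    obtain ⟨a, ha, rfl⟩ := z.exists_mk_eq
    obtain ⟨b, hb⟩ := mk_eq_zero.1 hz
    exact ⟨⟨(a, b), hb.symm⟩, rfl⟩
  refine isArtinian_of_surjective_of_ker_le toC hsurjA fun y hy => ?_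
  rw [LinearMap.mem_ker, htoC, mk_eq_zero] at hy
  obtain ⟨c, hc⟩ := hy
  obtain ⟨b', rfl⟩ := hsurj c
  obtain ⟨a, ha⟩ := (hex (y.1.2 - β b')).1 (by rw [map_sub, ← hc, hp, sub_self])
  rw [LinearMap.mem_ker, htoA]
  exact Subtype.ext (mk_eq_zero.2
    ⟨a, hinj (by rw [← hi, ha, map_sub, hβ, sub_zero, hP])⟩)

end ShortExact

end DiffHomology

end Homology

section Cone

variable {R : Type*} [CommRing R] {D E : Type*} [AddCommGroup D] [Module R D] [AddCommGroup E]
  [Module R E]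

/-- The differential of the shifted mapping cone of a map `f` of modules with differentials. -/
def coneDiff (δ : D →ₗ[R] D) (ε : E →ₗ[R] E) (f : D →ₗ[R] E) : D × E →ₗ[R] D × E :=
  (δ ∘ₗ LinearMap.fst R D E).prod (f.coprod (-ε))

variable {δ : D →ₗ[R] D} {ε : E →ₗ[R] E} {f : D →ₗ[R] E}

@[simp]
lemma coneDiff_apply (x : D × E) : coneDiff δ ε f x = (δ x.1, f x.1 - ε x.2) := by
  simp [coneDiff, sub_eq_add_neg]

lemma coneDiff_coneDiff (hδ : ∀ x, δ (δ x) = 0) (hε : ∀ x, ε (ε x) = 0)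
    (hf : ∀ x, ε (f x) = f (δ x)) (x : D × E) : coneDiff δ ε f (coneDiff δ ε f x) = 0 := by
  simp [hδ, hε, hf]

/-- The homology of the cone of `f`. -/
abbrev ConeHomology (δ : D →ₗ[R] D) (ε : E →ₗ[R] E) (f : D →ₗ[R] E) : Type _ :=
  DiffHomology (coneDiff δ ε f)

variable (δ ε f) in
/-- The projection of the homology of the cone of `f` onto the homology of the source of `f`. -/
def coneFst : ConeHomology δ ε f →ₗ[R] DiffHomology δ :=
  DiffHomology.map (LinearMap.fst R D E) (by simp)

section RTensor

variable (δ ε f) (M : Type*) [AddCommGroup M] [Module R M]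

lemma prodLeft_rTensor_coneDiff (z : (D × E) ⊗[R] M) :
    TensorProduct.prodLeft R R D E M ((coneDiff δ ε f).rTensor M z) =
      coneDiff (δ.rTensor M) (ε.rTensor M) (f.rTensor M)
        (TensorProduct.prodLeft R R D E M z) := by
  induction z using TensorProduct.induction_on with
  | zero => simp only [map_zero]
  | tmul y m =>
    obtain ⟨y, w⟩ := y
    simp [TensorProduct.sub_tmul]
  | add x y hx hy => simp only [map_add, hx, hy]

/-- Tensoring commutes with forming cones, on the level of homology. -/
noncomputable def coneRTensorEquiv : DiffHomology ((coneDiff δ ε f).rTensor M) ≃ₗ[R]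
    ConeHomology (δ.rTensor M) (ε.rTensor M) (f.rTensor M) :=
  DiffHomology.congr (B := D ⊗[R] M × E ⊗[R] M) (TensorProduct.prodLeft R R D E M)
    fun z => (prodLeft_rTensor_coneDiff δ ε f M z).symm

variable {M}

lemma snd_rTensor_coneDiff (z : (D × E) ⊗[R] M) :
    (LinearMap.snd R D E).rTensor M ((coneDiff δ ε f).rTensor M z) =
      f.rTensor M ((LinearMap.fst R D E).rTensor M z) -
        ε.rTensor M ((LinearMap.snd R D E).rTensor M z) := by
  simp only [← LinearMap.comp_apply, ← LinearMap.rTensor_comp, ← LinearMap.sub_apply,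
    ← LinearMap.rTensor_sub]
  congr 2
  exact LinearMap.ext fun x => by simp

end RTensor

lemma isArtinian_coneHomology_of_subsingleton [Subsingleton E] [IsArtinian R (DiffHomology δ)] :
    IsArtinian R (ConeHomology δ ε f) := by
  refine isArtinian_of_injective (coneFst δ ε f) ((injective_iff_map_eq_zero _).2 fun z hz => ?_)
  obtain ⟨x, hx, rfl⟩ := z.exists_mk_eq
  obtain ⟨y, hy⟩ := DiffHomology.mk_eq_zero.1 hz
  exact DiffHomology.mk_eq_zero.2 ⟨(y, 0), Prod.ext (by simpa using hy) (Subsingleton.elim _ _)⟩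

variable {a : R} [IsLocalizedModule (Submonoid.powers a) f] (hf : ∀ x, ε (f x) = f (δ x))

include hf

lemma exists_pow_smul_eq_zero_coneHomology (z : ConeHomology δ ε f) :
    ∃ k : ℕ, a ^ k • z = 0 := by
  obtain ⟨⟨u, w⟩, hz, rfl⟩ := z.exists_mk_eq
  rw [coneDiff_apply, Prod.mk_eq_zero, sub_eq_zero] at hz
  obtain ⟨⟨w₀, ⟨_, k, rfl⟩⟩, hw⟩ := IsLocalizedModule.surj (Submonoid.powers a) f w
  simp only [Submonoid.smul_def] at hw
  obtain ⟨⟨_, r, rfl⟩, hr⟩ := (IsLocalizedModule.eq_iff_exists (Submonoid.powers a) f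
    (x₁ := a ^ k • u) (x₂ := δ w₀)).1 (by rw [← hf, ← hw, map_smul, map_smul, hz.2])
  simp only [Submonoid.smul_def] at hr
  refine ⟨r + k, ?_⟩
  rw [DiffHomology.smul_mk, DiffHomology.mk_eq_zero]
  refine ⟨(a ^ r • w₀, 0), ?_⟩
  rw [coneDiff_apply, map_smul, ← hr, map_smul, ← hw, map_zero, sub_zero, pow_add, mul_smul,
    Prod.smul_mk, Prod.smul_mk]

lemma mem_range_coneFst_of_pow_smul_eq_zero {r : ℕ} {z : DiffHomology δ} (hz : a ^ r • z = 0) :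
    z ∈ LinearMap.range (coneFst δ ε f) := by
  obtain ⟨u, hu, rfl⟩ := z.exists_mk_eq
  rw [DiffHomology.smul_mk, DiffHomology.mk_eq_zero] at hz
  obtain ⟨b, hb⟩ := hz
  let s : Submonoid.powers a := ⟨a ^ r, r, rfl⟩
  let w : E := IsLocalizedModule.mk' f b s
  have hw : ε w = f u := by
    refine IsLocalizedModule.smul_injective f s ?_
    have hsw : s • w = f b := IsLocalizedModule.mk'_cancel' f b s
    calc s • ε w = ε (s • w) := by simp only [Submonoid.smul_def, map_smul]
      _ = s • f u := by rw [hsw, hf, hb, map_smul]; rfl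
  exact ⟨DiffHomology.mk (u, w) (by simp [hu, hw]), rfl⟩

lemma exists_pow_smul_eq_pow_smul_of_isArtinian_coneHomology
    [IsArtinian R (ConeHomology δ ε f)] :
    ∃ c : ℕ, ∀ (n r : ℕ) (z : DiffHomology δ), a ^ r • z = 0 → ∃ z', a ^ c • z = a ^ n • z' := by
  obtain ⟨c, hc⟩ := IsArtinian.range_smul_pow_stabilizes
    (M := ConeHomology δ ε f) a
  refine ⟨c, fun n r z hz => ?_⟩
  obtain ⟨y, rfl⟩ := mem_range_coneFst_of_pow_smul_eq_zero hf hz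
  have hy : a ^ c • y ∈ LinearMap.range (a ^ (c + n) • (LinearMap.id (R := R)
      (M := ConeHomology δ ε f))) := hc (c + n) (Nat.le_add_right _ _) ▸ ⟨y, rfl⟩
  obtain ⟨y', hy'⟩ := hy
  refine ⟨coneFst δ ε f (a ^ c • y'), ?_⟩
  rw [← map_smul, ← map_smul, ← hy', smul_smul, ← pow_add, add_comm n]
  rfl

end Cone

section Flat

variable {R : Type*} [CommRing R]

instance instFlatProd {K L : Type*} [AddCommGroup K] [Module R K] [AddCommGroup L] [Module R L]
    [Module.Flat R K] [Module.Flat R L] : Module.Flat R (K × L) := by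
  rw [Module.Flat.iff_rTensor_injective']
  intro I
  have hconj : (TensorProduct.prodRight R R R K L).toLinearMap ∘ₗ I.subtype.rTensor (K × L) =
      (I.subtype.rTensor K).prodMap (I.subtype.rTensor L) ∘ₗ
        (TensorProduct.prodRight R R I K L).toLinearMap :=
    TensorProduct.ext' fun _ _ => rfl
  have hK : Function.Injective (I.subtype.rTensor K) :=
    Module.Flat.rTensor_preserves_injective_linearMap _ Subtype.val_injective
  have hL : Function.Injective (I.subtype.rTensor L) :=
    Module.Flat.rTensor_preserves_injective_linearMap _ Subtype.val_injective
  refine .of_comp (f := TensorProduct.prodRight R R R K L) ?_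
  have := (hK.prodMap hL).comp (TensorProduct.prodRight R R I K L).injective
  convert this
  exact congrArg DFunLike.coe hconj

variable {K : Type*} [AddCommGroup K] [Module R K] {δ : K →ₗ[R] K}
  {A B : Type*} [AddCommGroup A] [Module R A] [AddCommGroup B] [Module R B]

lemma rTensor_lTensor_apply (g : A →ₗ[R] B) (x : K ⊗[R] A) :
    δ.rTensor B (g.lTensor K x) = g.lTensor K (δ.rTensor A x) := by
  rw [← LinearMap.comp_apply, ← LinearMap.comp_apply, LinearMap.rTensor_comp_lTensor,
    LinearMap.lTensor_comp_rTensor]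

variable (A) in
lemma rTensor_apply_rTensor_apply_eq_zero (hδ : ∀ x, δ (δ x) = 0) (x : K ⊗[R] A) :
    δ.rTensor A (δ.rTensor A x) = 0 := by
  rw [← LinearMap.comp_apply, ← LinearMap.rTensor_comp,
    show δ ∘ₗ δ = 0 from LinearMap.ext hδ, LinearMap.rTensor_zero, LinearMap.zero_apply]

/-- Multiplication by `a` on the homology of `K ⊗ A` factors through the homology of `K ⊗ aA`. -/
lemma isArtinian_ker_lsmul_diffHomology [Module.Flat R K] (hδ : ∀ x, δ (δ x) = 0) (a : R)
    (hker : IsArtinian R (DiffHomology (δ.rTensor (LinearMap.ker (LinearMap.lsmul R A a)))))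
    (hcoker : IsArtinian R
      (DiffHomology (δ.rTensor (A ⧸ LinearMap.range (LinearMap.lsmul R A a))))) :
    IsArtinian R (LinearMap.ker (LinearMap.lsmul R (DiffHomology (δ.rTensor A)) a)) := by
  let m := LinearMap.lsmul R A a
  have hq := DiffHomology.isArtinian_ker_map_of_surjective
    (rTensor_lTensor_apply (δ := δ) (LinearMap.ker m).subtype)
    (rTensor_lTensor_apply m.rangeRestrict) (rTensor_apply_rTensor_apply_eq_zero A hδ)
    (Module.Flat.lTensor_preserves_injective_linearMap _ (Submodule.subtype_injective _))
    (lTensor_exact K (by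
      rw [LinearMap.exact_iff, LinearMap.ker_rangeRestrict, Submodule.range_subtype])
      m.surjective_rangeRestrict)
    (LinearMap.lTensor_surjective K m.surjective_rangeRestrict) hker
  have hi := DiffHomology.isArtinian_ker_map_of_injective
    (rTensor_lTensor_apply (δ := δ) (LinearMap.range m).subtype)
    (rTensor_lTensor_apply (LinearMap.range m).mkQ) (rTensor_apply_rTensor_apply_eq_zero A hδ)
    (Module.Flat.lTensor_preserves_injective_linearMap _ (Submodule.subtype_injective _))
    (lTensor_exact K (by
      rw [LinearMap.exact_iff, Submodule.ker_mkQ, Submodule.range_subtype])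
      (Submodule.mkQ_surjective _))
    (LinearMap.lTensor_surjective K (Submodule.mkQ_surjective _)) hcoker
  suffices h : LinearMap.lsmul R (DiffHomology (δ.rTensor A)) a =
      DiffHomology.map _ (rTensor_lTensor_apply (LinearMap.range m).subtype) ∘ₗ
        DiffHomology.map _ (rTensor_lTensor_apply m.rangeRestrict) from
    h ▸ isArtinian_ker_comp hq hi
  refine LinearMap.ext fun z => ?_
  obtain ⟨x, hx, rfl⟩ := z.exists_mk_eq
  have hfactor : (LinearMap.range m).subtype.lTensor K (m.rangeRestrict.lTensor K x) = a • x := by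
    rw [← LinearMap.comp_apply, ← LinearMap.lTensor_comp, LinearMap.subtype_comp_codRestrict,
      show m = a • LinearMap.id from rfl, LinearMap.lTensor_smul, LinearMap.lTensor_id]
    rfl
  rw [LinearMap.lsmul_apply, DiffHomology.smul_mk, LinearMap.comp_apply, DiffHomology.map_mk,
    DiffHomology.map_mk, DiffHomology.mk_eq_mk]
  exact ⟨0, by rw [map_zero, hfactor, sub_self]⟩

end Flat

section MultiplicitySystem

variable {R : Type*} [CommRing R] {M : Type*} [AddCommGroup M] [Module R M]

variable (M) in
/-- The list `l` is a multiplicity system on `M` if `Supp M ∩ V(l)` consists of maximal ideals. For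
a finite module over a Noetherian ring this says that `M / lM` has finite length. -/
def IsMultiplicitySystem (l : List R) : Prop :=
  ∀ p ∈ Module.support R M, (∀ a ∈ l, a ∈ p.asIdeal) → p.asIdeal.IsMaximal

lemma IsMultiplicitySystem.of_support_subset {N : Type*} [AddCommGroup N] [Module R N] {l : List R}
    {a : R} (hM : IsMultiplicitySystem M (a :: l))
    (hsupp : Module.support R N ⊆ Module.support R M) {n : ℕ} (ha : ∀ y : N, a ^ n • y = 0) :
    IsMultiplicitySystem N l := fun p hp hl =>
  hM p (hsupp hp) (List.forall_mem_cons.2 ⟨p.2.mem_of_pow_mem n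
    (Module.annihilator_le_of_mem_support hp (Module.mem_annihilator.2 ha)), hl⟩)

lemma pow_smul_quotSMulTop_eq_zero (a : R) (n : ℕ) (y : QuotSMulTop (a ^ n) M) : a ^ n • y = 0 := by
  obtain ⟨y, rfl⟩ := Submodule.mkQ_surjective _ y
  rw [← map_smul, Submodule.mkQ_apply, Submodule.Quotient.mk_eq_zero]
  exact Submodule.smul_mem_pointwise_smul _ _ _ trivial

lemma IsMultiplicitySystem.quotSMulTop {l : List R} {a : R}
    (hM : IsMultiplicitySystem M (a :: l)) (n : ℕ) :
    IsMultiplicitySystem (QuotSMulTop (a ^ n) M) l :=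
  hM.of_support_subset (Module.support_subset_of_surjective _ (Submodule.mkQ_surjective _))
    (pow_smul_quotSMulTop_eq_zero a n)

lemma IsMultiplicitySystem.krullDimLE_zero [Module.Finite R M]
    (hM : IsMultiplicitySystem M ([] : List R)) :
    Ring.KrullDimLE 0 (R ⧸ Module.annihilator R M) :=
  Ideal.krullDimLE_zero_quotient_iff_forall_minimalPrimes_isMaximal.2 fun p hp =>
    hM ⟨p, hp.1.1⟩ (Module.mem_support_iff_of_finite.2 hp.1.2) (by simp)

lemma isArtinian_of_isArtinianRing_quotient_annihilator [Module.Finite R M]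
    [IsArtinianRing (R ⧸ Module.annihilator R M)] : IsArtinian R M := by
  let _ : Module (R ⧸ Module.annihilator R M) M := Module.quotientAnnihilator
  have : IsScalarTower R (R ⧸ Module.annihilator R M) M := ⟨fun r s m => by
    obtain ⟨s, rfl⟩ := Ideal.Quotient.mk_surjective s
    exact mul_smul r s m⟩
  have : Module.Finite (R ⧸ Module.annihilator R M) M :=
    Module.Finite.of_restrictScalars_finite R _ _
  let i : M →ₛₗ[Ideal.Quotient.mk (Module.annihilator R M)] M := ⟨.id _, fun _ _ => rfl⟩
  exact (i.isArtinian_iff_of_bijective Function.bijective_id).2 inferInstance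

lemma IsMultiplicitySystem.isArtinian [IsNoetherianRing R] [Module.Finite R M]
    (hM : IsMultiplicitySystem M ([] : List R)) : IsArtinian R M := by
  have := hM.krullDimLE_zero
  have : IsArtinianRing (R ⧸ Module.annihilator R M) :=
    IsNoetherianRing.isArtinianRing_of_krullDimLE_zero
  exact isArtinian_of_isArtinianRing_quotient_annihilator

lemma isMaximal_of_mem_support_of_isArtinian [IsArtinian R M] {p : PrimeSpectrum R}
    (hp : p ∈ Module.support R M) : p.asIdeal.IsMaximal := by
  obtain ⟨m, hm⟩ := Module.mem_support_iff_exists_annihilator.1 hp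
  have : IsArtinian R (R ⧸ p.asIdeal) :=
    isArtinian_of_surjective_of_ker_le (LinearMap.toSpanSingleton R M m)
      (Submodule.mkQ_surjective p.asIdeal) (by
        rw [Submodule.ker_mkQ]
        exact fun r hr => hm ((Submodule.mem_annihilator_span_singleton m r).2 hr))
  have : IsArtinianRing (R ⧸ p.asIdeal) :=
    isArtinian_of_tower R this
  exact Ideal.Quotient.maximal_of_isField _ (IsArtinianRing.isField_of_isDomain _)

lemma isMultiplicitySystem_of_isFiniteLength [Module.Finite R M] {l : List R}
    (h : IsFiniteLength R (M ⧸ (Ideal.ofList l • (⊤ : Submodule R M)))) :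
    IsMultiplicitySystem M l := fun p hp hl => by
  have := (isFiniteLength_iff_isNoetherian_isArtinian.1 h).2
  refine isMaximal_of_mem_support_of_isArtinian
    (M := M ⧸ (Ideal.ofList l • (⊤ : Submodule R M))) ?_
  rw [Module.support_quotient]
  exact ⟨hp, (PrimeSpectrum.mem_zeroLocus _ _).2 (Ideal.span_le.2 hl)⟩

end MultiplicitySystem

section Away

variable {R : Type*} [CommRing R] (a : R) {K : Type*} [AddCommGroup K] [Module R K]

variable (K) in
/-- The localization `K_a` of the module `K` at the powers of `a`. -/
abbrev AwayModule : Type _ :=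
  Localization.Away a ⊗[R] K

/-- The map `y ↦ y / a ^ k` from `K` to `K_a`. -/
noncomputable def divPow (k : ℕ) : K →ₗ[R] AwayModule a K :=
  TensorProduct.mk R _ K (IsLocalization.Away.invSelf a ^ k)

instance isLocalizedModule_rTensor_divPow (M : Type*) [AddCommGroup M] [Module R M] :
    IsLocalizedModule (Submonoid.powers a) ((divPow a (K := K) 0).rTensor M) := by
  rw [divPow, pow_zero]
  exact inferInstanceAs (IsLocalizedModule (Submonoid.powers a)
    (TensorProduct.AlgebraTensorModule.rTensor R M (TensorProduct.mk R (Localization.Away a) K 1)))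

lemma pow_smul_divPow (k s : ℕ) (y : K) : a ^ s • divPow a (k + s) y = divPow a k y := by
  simp only [divPow, TensorProduct.mk_apply, TensorProduct.smul_tmul', Algebra.smul_def, map_pow]
  rw [pow_add, mul_left_comm, ← mul_pow, IsLocalization.Away.mul_invSelf, one_pow, mul_one]

lemma lTensor_divPow (g : K →ₗ[R] K) (k : ℕ) (y : K) :
    g.lTensor (Localization.Away a) (divPow a k y) = divPow a k (g y) :=
  rfl

lemma exists_divPow_eq (w : AwayModule a K) : ∃ (j : ℕ) (y : K), divPow a j y = w := by
  have : IsLocalizedModule (Submonoid.powers a) (divPow a (K := K) 0) := by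
    rw [divPow, pow_zero]
    infer_instance
  obtain ⟨⟨y, ⟨_, j, rfl⟩⟩, hw⟩ :=
    IsLocalizedModule.surj (Submonoid.powers a) (divPow a (K := K) 0) w
  refine ⟨j, y, IsLocalizedModule.smul_injective (divPow a (K := K) 0)
    (⟨a ^ j, j, rfl⟩ : Submonoid.powers a) ?_⟩
  simp only [Submonoid.smul_def] at hw ⊢
  rw [hw, ← pow_smul_divPow a 0 j y, zero_add]

lemma lTensor_rTensor_divPow {M : Type*} [AddCommGroup M] [Module R M] (g : K →ₗ[R] K)
    (y : K ⊗[R] M) :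
    (g.lTensor (Localization.Away a)).rTensor M ((divPow a 0).rTensor M y) =
      (divPow a 0).rTensor M (g.rTensor M y) := by
  simp only [← LinearMap.comp_apply, ← LinearMap.rTensor_comp]
  rfl

lemma subsingleton_awayModule_tensorProduct {M : Type*} [AddCommGroup M] [Module R M]
    (ha : ∀ m : M, a • m = 0) : Subsingleton (AwayModule a K ⊗[R] M) := by
  refine subsingleton_of_forall_eq 0 fun z => ?_
  induction z using TensorProduct.induction_on with
  | zero => rfl
  | tmul w m =>
    obtain ⟨j, y, rfl⟩ := exists_divPow_eq a w
    rw [← pow_smul_divPow a j 1 y, pow_one, TensorProduct.smul_tmul, ha, TensorProduct.tmul_zero]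
  | add z z' hz hz' => rw [hz, hz', add_zero]

end Away

section Cech

/-- An ungraded model of the Čech complex `⨂ᵢ (R → R_{aᵢ})` of `l = [a₁, …, a_r]`: `K` is the total
module, `δ` its differential and `e` the projection onto the top degree `R_{a₁⋯a_r}`, in which `τ k`
stands for `1 / (a₁⋯a_r) ^ k`. -/
structure CechModel {R : Type u} [CommRing R] (l : List R) where
  K : Type u
  [addCommGroup : AddCommGroup K]
  [module : Module R K]
  [flat : Module.Flat R K]
  δ : K →ₗ[R] K
  e : K →ₗ[R] K
  τ : ℕ → K
  δ_δ : ∀ y, δ (δ y) = 0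
  δ_τ : ∀ k, δ (τ k) = 0
  e_τ : ∀ k, e (τ k) = τ k
  exists_e_eq_smul_τ : ∀ y, ∃ (k : ℕ) (r : R), e y = r • τ k
  prod_smul_τ : ∀ k, l.prod • τ (k + 1) = τ k
  exists_δ_eq_smul_τ : ∀ k, ∀ r ∈ powIdeal l k, ∃ y, δ y = r • τ k

attribute [instance] CechModel.addCommGroup CechModel.module CechModel.flat

namespace CechModel

variable {R : Type u} [CommRing R]

section Top

variable {l : List R} (C : CechModel l) {M : Type v} [AddCommGroup M] [Module R M]

lemma prod_pow_smul_τ (k s : ℕ) : l.prod ^ s • C.τ (k + s) = C.τ k := by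
  induction s with
  | zero => simp
  | succ s ih => rw [pow_succ, mul_smul, ← add_assoc, C.prod_smul_τ, ih]

lemma τ_tmul (k s : ℕ) (m : M) : C.τ k ⊗ₜ[R] m = C.τ (k + s) ⊗ₜ[R] (l.prod ^ s • m) := by
  rw [← C.prod_pow_smul_τ k s, TensorProduct.smul_tmul]

lemma exists_rTensor_e_eq (n : ℕ) (z : C.K ⊗[R] M) :
    ∃ (s : ℕ) (q : M), C.e.rTensor M z = C.τ (n + s) ⊗ₜ q := by
  induction z using TensorProduct.induction_on with
  | zero => exact ⟨0, 0, by simp⟩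
  | tmul y m =>
    obtain ⟨k, r, h⟩ := C.exists_e_eq_smul_τ y
    refine ⟨k, l.prod ^ n • r • m, ?_⟩
    rw [LinearMap.rTensor_tmul, h, TensorProduct.smul_tmul, C.τ_tmul k n, add_comm]
  | add x y hx hy =>
    obtain ⟨s, p, hp⟩ := hx
    obtain ⟨t, q, hq⟩ := hy
    refine ⟨s + t, l.prod ^ t • p + l.prod ^ s • q, ?_⟩
    rw [map_add, hp, hq, C.τ_tmul (n + s) t, C.τ_tmul (n + t) s, TensorProduct.tmul_add,
      add_right_comm n t s, add_assoc]

lemma exists_rTensor_δ_eq_τ_tmul {k : ℕ} {p : M}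
    (hp : p ∈ powIdeal l k • (⊤ : Submodule R M)) : ∃ b, C.δ.rTensor M b = C.τ k ⊗ₜ p := by
  induction hp using Submodule.smul_induction_on' with
  | smul r hr n _ =>
    obtain ⟨y, hy⟩ := C.exists_δ_eq_smul_τ k r hr
    exact ⟨y ⊗ₜ n, by rw [LinearMap.rTensor_tmul, hy, TensorProduct.smul_tmul]⟩
  | add x _ y _ hx hy =>
    obtain ⟨b, hb⟩ := hx
    obtain ⟨b', hb'⟩ := hy
    exact ⟨b + b', by rw [map_add, hb, hb', TensorProduct.tmul_add]⟩

/-- The converse of `exists_rTensor_δ_eq_τ_tmul` in the limit: the top cohomology of `K ⊗ M` is the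
direct limit of the modules `M / (a₁ ^ k, …, a_r ^ k)M`. -/
def DetectsLimClosure : Prop :=
  ∀ (M : Type v) [AddCommGroup M] [Module R M] (k : ℕ) (m : M) (z : C.K ⊗[R] M),
    C.e.rTensor M (C.δ.rTensor M z) = C.τ k ⊗ₜ m → MemLimClosure l k m

/-- The cohomology of `K ⊗ M` is Artinian for every finite module `M` on which `l` is a multiplicity
system. -/
def HasArtinianHomology : Prop :=
  ∀ (M : Type v) [AddCommGroup M] [Module R M] [Module.Finite R M],
    IsMultiplicitySystem M l → IsArtinian R (DiffHomology (C.δ.rTensor M))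

end Top

section Nil

/-- The Čech complex of the empty list: the ring in degree zero. -/
def nil : CechModel ([] : List R) where
  K := R
  δ := 0
  e := LinearMap.id
  τ := 1
  δ_δ := by simp
  δ_τ := by simp
  e_τ := by simp
  exists_e_eq_smul_τ y := ⟨0, y, by simp⟩
  prod_smul_τ := by simp
  exists_δ_eq_smul_τ k r hr := ⟨0, by simp_all⟩

lemma detectsLimClosure_nil : DetectsLimClosure.{u, v} (nil (R := R)) := by
  intro M _ _ k m z hz
  change R ⊗[R] M at z
  have hδ : (0 : R →ₗ[R] R).rTensor M z = 0 := by
    rw [LinearMap.rTensor_zero, LinearMap.zero_apply]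
  have hm : (0 : R ⊗[R] M) = (1 : R) ⊗ₜ[R] m :=
    hδ.symm.trans ((LinearMap.rTensor_id_apply M R _).symm.trans hz)
  simpa [memLimClosure_nil] using (congrArg (TensorProduct.lid R M) hm).symm

lemma hasArtinianHomology_nil [IsNoetherianRing R] :
    HasArtinianHomology.{u, v} (nil (R := R)) := by
  intro M _ _ _ hM
  have := hM.isArtinian
  have : IsArtinian R ((nil (R := R)).K ⊗[R] M) :=
    isArtinian_of_linearEquiv (TensorProduct.lid R M).symm
  infer_instance

end Nil

section Cons

variable {l : List R} (a : R) (C : CechModel l)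

/-- The Čech complex of `a :: l`, built as the cone of `K → K_a`. -/
noncomputable abbrev cons : CechModel (a :: l) where
  K := C.K × AwayModule a C.K
  flat := by
    have : Module.Flat R (Localization.Away a) := IsLocalization.flat _ (Submonoid.powers a)
    exact instFlatProd
  δ := coneDiff C.δ (C.δ.lTensor _) (divPow a 0)
  e := LinearMap.inr R _ _ ∘ₗ C.e.lTensor _ ∘ₗ LinearMap.snd R _ _
  τ k := (0, divPow a k (C.τ k))
  δ_δ := coneDiff_coneDiff C.δ_δ (fun w => by
    obtain ⟨j, y, rfl⟩ := exists_divPow_eq a w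
    simp [lTensor_divPow, C.δ_δ]) (lTensor_divPow a C.δ 0)
  δ_τ k := by simp [lTensor_divPow, C.δ_τ]
  e_τ k := by simp [lTensor_divPow, C.e_τ]
  exists_e_eq_smul_τ := by
    rintro ⟨u, w⟩
    obtain ⟨j, y, rfl⟩ := exists_divPow_eq a w
    obtain ⟨k, r, h⟩ := C.exists_e_eq_smul_τ y
    refine ⟨j + k, r * (l.prod ^ j * a ^ k), ?_⟩
    have hτ : l.prod ^ j • a ^ k • divPow a (j + k) (C.τ (j + k)) = divPow a j (C.τ k) := by
      rw [pow_smul_divPow, ← map_smul, add_comm, C.prod_pow_smul_τ]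
    simp [lTensor_divPow, h, mul_smul, hτ]
  prod_smul_τ k := by
    have h := pow_smul_divPow a k 1 (C.τ (k + 1))
    rw [pow_one] at h
    simp only [List.prod_cons, mul_comm a, mul_smul, Prod.smul_mk, h, ← map_smul, C.prod_smul_τ,
      smul_zero]
  exists_δ_eq_smul_τ k r hr := by
    rw [powIdeal_cons] at hr
    obtain ⟨_, hr₁, r₂, hr₂, rfl⟩ := Submodule.mem_sup.1 hr
    obtain ⟨c, rfl⟩ := Ideal.mem_span_singleton'.1 hr₁
    obtain ⟨y, hy⟩ := C.exists_δ_eq_smul_τ k r₂ hr₂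
    refine ⟨(c • C.τ k, -divPow a k y), ?_⟩
    have hτ := pow_smul_divPow a 0 k (C.τ k)
    rw [zero_add] at hτ
    simp [lTensor_divPow, C.δ_τ, hy, add_smul, mul_smul, hτ]

section Detects

variable {M : Type v} [AddCommGroup M] [Module R M]

lemma exists_rTensor_divPow_sub_eq {k : ℕ} {m : M} {z : (C.cons a).K ⊗[R] M}
    (hz : (C.cons a).e.rTensor M ((C.cons a).δ.rTensor M z) = (C.cons a).τ k ⊗ₜ m) :
    ∃ (u : C.K ⊗[R] M) (w : AwayModule a C.K ⊗[R] M),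
      (divPow a 0).rTensor M (C.e.rTensor M u) - (C.e.lTensor (Localization.Away a)).rTensor M
        ((C.δ.lTensor (Localization.Away a)).rTensor M w) = divPow a k (C.τ k) ⊗ₜ m := by
  change (C.K × AwayModule a C.K) ⊗[R] M at z
  change (LinearMap.inr R C.K _ ∘ₗ C.e.lTensor (Localization.Away a) ∘ₗ
    LinearMap.snd R C.K _).rTensor M ((coneDiff C.δ (C.δ.lTensor _) (divPow a 0)).rTensor M z) =
      ((0, divPow a k (C.τ k)) : C.K × AwayModule a C.K) ⊗ₜ[R] m at hz
  refine ⟨(LinearMap.fst R C.K _).rTensor M z, (LinearMap.snd R C.K _).rTensor M z, ?_⟩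
  have h := congrArg ((LinearMap.snd R C.K (AwayModule a C.K)).rTensor M) hz
  rw [← lTensor_rTensor_divPow,
    ← map_sub ((C.e.lTensor (Localization.Away a)).rTensor M), ← snd_rTensor_coneDiff C.δ,
    ← LinearMap.comp_apply, ← LinearMap.rTensor_comp]
  rwa [← LinearMap.comp_apply, ← LinearMap.rTensor_comp] at h

lemma exists_pow_smul_τ_tmul_eq {k : ℕ} {m : M} {z : (C.cons a).K ⊗[R] M}
    (hz : (C.cons a).e.rTensor M ((C.cons a).δ.rTensor M z) = (C.cons a).τ k ⊗ₜ m) :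
    ∃ (j : ℕ) (u w : C.K ⊗[R] M), a ^ j • (C.τ k ⊗ₜ[R] m) =
      a ^ (k + j) • C.e.rTensor M u - C.e.rTensor M (C.δ.rTensor M w) := by
  obtain ⟨u, w, h⟩ := exists_rTensor_divPow_sub_eq a C hz
  obtain ⟨⟨w₀, ⟨_, j, rfl⟩⟩, hw⟩ :=
    IsLocalizedModule.surj (Submonoid.powers a) ((divPow a (K := C.K) 0).rTensor M) w
  simp only [Submonoid.smul_def] at hw
  have hloc : (divPow a 0).rTensor M (a ^ j • (C.τ k ⊗ₜ[R] m)) = (divPow a 0).rTensor M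
      (a ^ (k + j) • C.e.rTensor M u - a ^ k • C.e.rTensor M (C.δ.rTensor M w₀)) := by
    have hτ := pow_smul_divPow a 0 k (C.τ k)
    rw [zero_add] at hτ
    calc (divPow a 0).rTensor M (a ^ j • (C.τ k ⊗ₜ[R] m))
        = a ^ (k + j) • (divPow a k (C.τ k) ⊗ₜ[R] m) := by
          rw [map_smul, LinearMap.rTensor_tmul, ← hτ, ← TensorProduct.smul_tmul', smul_smul,
            ← pow_add, add_comm j]
      _ = _ := by
          rw [← h, smul_sub, map_sub, map_smul, map_smul, ← lTensor_rTensor_divPow a C.e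
            (C.δ.rTensor M w₀), ← lTensor_rTensor_divPow a C.δ, ← hw, map_smul, map_smul,
            smul_smul, ← pow_add]
  obtain ⟨⟨_, r, rfl⟩, hr⟩ := (IsLocalizedModule.eq_iff_exists (Submonoid.powers a)
    ((divPow a (K := C.K) 0).rTensor M)).1 hloc
  simp only [Submonoid.smul_def] at hr
  refine ⟨r + j, u, a ^ (r + k) • w₀, ?_⟩
  rw [pow_add, mul_smul, hr]
  simp only [smul_sub, smul_smul, ← pow_add, map_smul, add_left_comm k r j]

variable {a C} in
lemma DetectsLimClosure.cons (hC : DetectsLimClosure.{u, v} C) :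
    DetectsLimClosure.{u, v} (C.cons a) := by
  intro M _ _ k m z hz
  obtain ⟨j, u, w, h⟩ := exists_pow_smul_τ_tmul_eq a C hz
  obtain ⟨s, q, hq⟩ := C.exists_rTensor_e_eq k u
  obtain ⟨v, hv⟩ := hC M (k + s) (a ^ j • l.prod ^ s • m - a ^ (k + j) • q) (-w) (by
    rw [map_neg, map_neg, TensorProduct.tmul_sub, TensorProduct.tmul_smul, ← C.τ_tmul k s, h, hq,
      TensorProduct.tmul_smul, sub_sub_cancel_left])
  refine memLimClosure_cons_iff.2 ⟨j, s + v, l.prod ^ v • q, ?_⟩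
  convert hv using 1
  · rw [add_assoc]
  · module

end Detects

section Artinian

variable (M : Type v) [AddCommGroup M] [Module R M]

/-- The homology of `(C.cons a) ⊗ M` as that of the cone of `K ⊗ M → K_a ⊗ M`. -/
noncomputable def consHomologyEquiv : DiffHomology ((C.cons a).δ.rTensor M) ≃ₗ[R]
    ConeHomology (E := AwayModule a C.K ⊗[R] M) (C.δ.rTensor M)
      ((C.δ.lTensor (Localization.Away a)).rTensor M) ((divPow a 0).rTensor M) :=
  coneRTensorEquiv (D := C.K) (E := AwayModule a C.K) C.δ (C.δ.lTensor (Localization.Away a))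
    (divPow a 0) M

variable {M}

lemma exists_pow_smul_eq_zero_diffHomology_cons
    (z : DiffHomology ((C.cons a).δ.rTensor M)) : ∃ k : ℕ, a ^ k • z = 0 := by
  obtain ⟨k, hk⟩ := exists_pow_smul_eq_zero_coneHomology (a := a) (D := C.K ⊗[R] M)
    (E := AwayModule a C.K ⊗[R] M) (lTensor_rTensor_divPow a C.δ) (consHomologyEquiv a C M z)
  exact ⟨k, (consHomologyEquiv a C M).injective (by rw [map_smul, hk, map_zero])⟩

variable {a C}

lemma HasArtinianHomology.isArtinian_cons_of_smul_eq_zero [Module.Finite R M]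
    (hC : HasArtinianHomology.{u, v} C) (hM : IsMultiplicitySystem M l)
    (ha : ∀ m : M, a • m = 0) :
    IsArtinian R (DiffHomology ((C.cons a).δ.rTensor M)) := by
  have := hC M hM
  have : Subsingleton (AwayModule a C.K ⊗[R] M) := subsingleton_awayModule_tensorProduct a ha
  have := isArtinian_coneHomology_of_subsingleton (E := AwayModule a C.K ⊗[R] M)
    (δ := C.δ.rTensor M) (ε := (C.δ.lTensor (Localization.Away a)).rTensor M)
    (f := (divPow a 0).rTensor M)
  exact isArtinian_of_linearEquiv (consHomologyEquiv a C M).symm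

/-- The homology is `a`-power torsion, so Melkersson's criterion reduces the claim to modules
killed by `a`. -/
lemma HasArtinianHomology.cons [IsNoetherianRing R] (hC : HasArtinianHomology.{u, v} C) :
    HasArtinianHomology.{u, v} (C.cons a) := by
  intro M _ _ _ hM
  refine isArtinian_of_isArtinian_ker_lsmul (exists_pow_smul_eq_zero_diffHomology_cons a C) ?_
  have of_smul_eq_zero {N : Type v} [AddCommGroup N] [Module R N] [Module.Finite R N]
      (hN : Module.support R N ⊆ Module.support R M) (ha : ∀ y : N, a • y = 0) :
      IsArtinian R (DiffHomology ((C.cons a).δ.rTensor N)) :=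
    hC.isArtinian_cons_of_smul_eq_zero (hM.of_support_subset (n := 1) hN (by simpa using ha)) ha
  refine isArtinian_ker_lsmul_diffHomology (C.cons a).δ_δ a
    (of_smul_eq_zero (Module.support_subset_of_injective _ (Submodule.subtype_injective _))
      fun y => Subtype.ext y.2)
    (of_smul_eq_zero (Module.support_subset_of_surjective _ (Submodule.mkQ_surjective _))
      fun y => ?_)
  obtain ⟨y, rfl⟩ := Submodule.mkQ_surjective _ y
  exact (Submodule.Quotient.mk_eq_zero _).2 ⟨y, rfl⟩

end Artinian

end Cons

/-- The Čech complex of a list. -/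
noncomputable def cech : (l : List R) → CechModel l
  | [] => nil
  | a :: l => (cech l).cons a

lemma detectsLimClosure_cech (l : List R) : DetectsLimClosure.{u, v} (cech l) := by
  induction l with
  | nil => exact detectsLimClosure_nil
  | cons a l ih => exact ih.cons

lemma hasArtinianHomology_cech [IsNoetherianRing R] (l : List R) :
    HasArtinianHomology.{u, v} (cech l) := by
  induction l with
  | nil => exact hasArtinianHomology_nil
  | cons a l ih => exact ih.cons

end CechModel

end Cech

section Stable

open CechModel
open scoped Pointwise

variable {R : Type u} [CommRing R] [IsNoetherianRing R] {M : Type v} [AddCommGroup M]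
  [Module R M] [Module.Finite R M] {a : R} {l : List R}

lemma IsMultiplicitySystem.exists_pow_smul_diffHomology_cech_eq
    (hM : IsMultiplicitySystem M (a :: l)) :
    ∃ c : ℕ, ∀ (n r : ℕ) (z : DiffHomology ((cech l).δ.rTensor M)), a ^ r • z = 0 →
      ∃ z', a ^ c • z = a ^ n • z' := by
  have : IsArtinian R (DiffHomology (((cech l).cons a).δ.rTensor M)) :=
    hasArtinianHomology_cech (a :: l) M hM
  have : IsArtinian R (ConeHomology (E := AwayModule a (cech l).K ⊗[R] M) ((cech l).δ.rTensor M)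
      (((cech l).δ.lTensor (Localization.Away a)).rTensor M) ((divPow a 0).rTensor M)) :=
    isArtinian_of_linearEquiv (consHomologyEquiv a (cech l) M)
  exact exists_pow_smul_eq_pow_smul_of_isArtinian_coneHomology (D := (cech l).K ⊗[R] M)
    (E := AwayModule a (cech l).K ⊗[R] M) (lTensor_rTensor_divPow a (cech l).δ)

lemma IsMultiplicitySystem.exists_memLimClosure_of_pow_smul_mem
    (hM : IsMultiplicitySystem M (a :: l)) :
    ∃ c : ℕ, ∀ (n j k : ℕ) (w : M), a ^ j • w ∈ powIdeal l k • (⊤ : Submodule R M) →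
      ∃ (r : ℕ) (q : M), MemLimClosure l (k + r) (l.prod ^ r • a ^ c • w - a ^ n • q) := by
  obtain ⟨c, hc⟩ := hM.exists_pow_smul_diffHomology_cech_eq
  refine ⟨c, fun n j k w hw => ?_⟩
  let C := cech l
  have hδ : C.δ.rTensor M (C.τ k ⊗ₜ w) = 0 := by
    rw [LinearMap.rTensor_tmul, C.δ_τ, TensorProduct.zero_tmul]
  have htors : a ^ j • DiffHomology.mk (α := C.δ.rTensor M) (C.τ k ⊗ₜ w) hδ = 0 := by
    rw [DiffHomology.smul_mk, DiffHomology.mk_eq_zero, ← TensorProduct.tmul_smul]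
    exact C.exists_rTensor_δ_eq_τ_tmul hw
  obtain ⟨z', hz'⟩ := hc n j _ htors
  obtain ⟨g, hg, rfl⟩ := z'.exists_mk_eq
  rw [DiffHomology.smul_mk, DiffHomology.smul_mk, DiffHomology.mk_eq_mk] at hz'
  obtain ⟨b, hb⟩ := hz'
  obtain ⟨r, q, hq⟩ := C.exists_rTensor_e_eq k g
  refine ⟨r, q, detectsLimClosure_cech.{u, v} l M (k + r) _ b ?_⟩
  rw [hb, map_sub, map_smul, map_smul, LinearMap.rTensor_tmul, C.e_τ, hq, C.τ_tmul k r,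
    TensorProduct.tmul_sub, TensorProduct.tmul_smul, smul_comm, TensorProduct.tmul_smul,
    TensorProduct.tmul_smul, TensorProduct.tmul_smul]

lemma IsMultiplicitySystem.exists_pow_forall_memLimClosure_quotSMulTop
    (hM : IsMultiplicitySystem M (a :: l)) :
    ∃ c : ℕ, ∀ y : M, (∀ k, MemLimClosure (a :: l) k y) →
      ∀ n k, MemLimClosure l k (Submodule.Quotient.mk (a ^ c • y) : QuotSMulTop (a ^ n) M) := by
  obtain ⟨c, hc⟩ := hM.exists_memLimClosure_of_pow_smul_mem
  refine ⟨c, fun y hy n k => ?_⟩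
  obtain ⟨j, s, m, hm⟩ := memLimClosure_cons_iff.1 (hy (k + n))
  obtain ⟨r, q, v, hv⟩ := hc n j (k + n + s) (l.prod ^ s • y - a ^ (k + n) • m) hm
  have hmap := Submodule.mem_map_of_mem (f := Submodule.mkQ ((a ^ n) • (⊤ : Submodule R M))) hv
  rw [Submodule.map_smul'', Submodule.map_top, Submodule.range_mkQ] at hmap
  refine ⟨v + r + s, ?_⟩
  convert Submodule.smul_mono_left
    (powIdeal_antitone l (show k + (v + r + s) ≤ k + n + s + r + v by omega)) hmap using 1
  rw [← Submodule.mkQ_apply, ← map_smul, ← sub_eq_zero, ← map_sub, Submodule.mkQ_apply,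
    Submodule.Quotient.mk_eq_zero]
  refine ⟨l.prod ^ (v + r) • a ^ (c + k) • m + l.prod ^ v • q, trivial, ?_⟩
  rw [DistribSMul.toLinearMap_apply]
  module

end Stable

section SupportDim

open scoped Pointwise

variable {R : Type u} [CommRing R] {M : Type v} [AddCommGroup M] [Module R M]

lemma length_le_supportDim_of_head_mem_support {N L : Type*} [AddCommGroup N] [Module R N]
    [AddCommGroup L] [Module R L] (s : LTSeries (Module.support R N))
    (hs : s.head.1 ∈ Module.support R L) : (s.length : WithBot ℕ∞) ≤ Module.supportDim R L :=
  Order.LTSeries.length_le_krullDim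
    { length := s.length
      toFun := fun i => ⟨(s i).1, Module.mem_support_mono (LTSeries.head_le s i) hs⟩
      step := fun i => s.step i }

lemma supportDim_le_max_of_support_subset_union {N L P : Type*} [AddCommGroup N] [Module R N]
    [AddCommGroup L] [Module R L] [AddCommGroup P] [Module R P]
    (h : Module.support R N ⊆ Module.support R L ∪ Module.support R P) :
    Module.supportDim R N ≤ max (Module.supportDim R L) (Module.supportDim R P) :=
  iSup_le fun s => (h s.head.2).elim
    (fun hL => le_max_of_le_left (length_le_supportDim_of_head_mem_support s hL))
    (fun hP => le_max_of_le_right (length_le_supportDim_of_head_mem_support s hP))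

lemma mem_support_pow_smul {N : Submodule R M} {a : R} {p : PrimeSpectrum R}
    (hp : p ∈ Module.support R N) (ha : a ∉ p.asIdeal) (c : ℕ) :
    p ∈ Module.support R ↥(a ^ c • N) := by
  obtain ⟨y, hy⟩ := Module.mem_support_iff'.1 hp
  refine Module.mem_support_iff'.2 ⟨⟨a ^ c • (y : M), Submodule.smul_mem_pointwise_smul _ _ _ y.2⟩,
    fun r hr hry => hy (r * a ^ c)
      (p.2.mul_notMem hr fun hac => ha (p.2.mem_of_pow_mem _ hac)) (Subtype.ext ?_)⟩
  exact (mul_smul r (a ^ c) (y : M)).trans (congrArg Subtype.val hry)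

lemma supportDim_le_max_pow_smul_quotSMulTop [Module.Finite R M] (N : Submodule R M) (a : R)
    (c : ℕ) : Module.supportDim R N ≤
      max (Module.supportDim R ↥(a ^ c • N)) (Module.supportDim R (QuotSMulTop a M)) := by
  refine supportDim_le_max_of_support_subset_union fun p hp => ?_
  by_cases ha : a ∈ p.asIdeal
  · refine Or.inr ?_
    rw [Module.support_quotSMulTop]
    exact ⟨Module.support_subset_of_injective N.subtype N.subtype_injective hp,
      Set.singleton_subset_iff.2 ha⟩
  · exact Or.inl (mem_support_pow_smul hp ha c)

lemma supportDim_quotSMulTop_le_of_smul_top_inf_le {a b : R} {Q : Submodule R M}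
    (h : b • ⊤ ⊓ Q ≤ a • Q) :
    Module.supportDim R (QuotSMulTop a Q) ≤
      Module.supportDim R (Q.map (b • (⊤ : Submodule R M)).mkQ) := by
  let g : Q →ₗ[R] Q.map (b • (⊤ : Submodule R M)).mkQ :=
    (b • (⊤ : Submodule R M)).mkQ.submoduleMap Q
  have hker : LinearMap.ker g ≤ a • (⊤ : Submodule R Q) := by
    rintro ⟨y, hy⟩ hgy
    obtain ⟨z, hz, rfl⟩ := h ⟨(Submodule.Quotient.mk_eq_zero _).1 (congrArg Subtype.val hgy), hy⟩
    exact ⟨⟨z, hz⟩, trivial, rfl⟩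
  have hfactor : Function.Surjective (Submodule.factor hker) := Submodule.factor_surjective hker
  exact (Module.supportDim_le_of_surjective _ hfactor).trans
    (Module.supportDim_eq_of_equiv (g.quotKerEquivOfSurjective
      (LinearMap.submoduleMap_surjective _ Q))).le

variable [IsNoetherianRing R] [Module.Finite R M]

lemma exists_pow_smul_top_inf_le_pow_smul (N : Submodule R M) (a : R) (c : ℕ) :
    ∃ n : ℕ, a ^ n • ⊤ ⊓ N ≤ a ^ c • N := by
  obtain ⟨k, hk⟩ := Ideal.exists_pow_inf_eq_pow_smul (Ideal.span {a}) N
  have h := hk (k + c) (Nat.le_add_right k c)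
  rw [Nat.add_sub_cancel_left, Ideal.span_singleton_pow, Ideal.span_singleton_pow,
    Submodule.ideal_span_singleton_smul, Submodule.ideal_span_singleton_smul] at h
  exact ⟨k + c, h.trans_le (smul_mono_right _ inf_le_right)⟩

lemma supportDim_le_supportDim_quotSMulTop_add_one {a : R} (ha : a ∈ Ring.jacobson R) :
    Module.supportDim R M ≤ Module.supportDim R (QuotSMulTop a M) + 1 :=
  Module.supportDim_le_supportDim_quotSMulTop_succ_of_mem_jacobson
    (Ideal.jacobson_mono bot_le ((Ideal.jacobson_bot (R := R)).symm ▸ ha))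

lemma IsMultiplicitySystem.supportDim_le_length {l : List R}
    (hl : ∀ a ∈ l, a ∈ Ring.jacobson R) (hM : IsMultiplicitySystem M l) :
    Module.supportDim R M ≤ l.length := by
  induction l generalizing M with
  | nil =>
    rw [Module.supportDim_eq_ringKrullDim_quotient_annihilator]
    exact (Ring.krullDimLE_iff).1 hM.krullDimLE_zero
  | cons a l ih =>
    rw [List.forall_mem_cons] at hl
    have hquot := ih hl.2 (pow_one a ▸ hM.quotSMulTop 1)
    exact (supportDim_le_supportDim_quotSMulTop_add_one hl.1).trans
      (by simpa using add_le_add_left hquot 1)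

lemma IsMultiplicitySystem.supportDim_lt_length_of_forall_memLimClosure {l : List R}
    (hl : ∀ a ∈ l, a ∈ Ring.jacobson R) (hM : IsMultiplicitySystem M l) {N : Submodule R M}
    (hN : ∀ y ∈ N, ∀ k, MemLimClosure l k y) : Module.supportDim R N < l.length := by
  induction l generalizing M with
  | nil =>
    have : Subsingleton N :=
      subsingleton_of_forall_eq 0 fun y => Subtype.ext (memLimClosure_nil.1 (hN y y.2 0))
    rw [Module.supportDim_eq_bot_of_subsingleton]
    exact WithBot.bot_lt_coe _
  | cons a l ih =>
    rw [List.forall_mem_cons] at hl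
    obtain ⟨c, hc⟩ := hM.exists_pow_forall_memLimClosure_quotSMulTop
    obtain ⟨n, hn⟩ := exists_pow_smul_top_inf_le_pow_smul N a (c + 1)
    let Q : Submodule R M := a ^ c • N
    have hinf : a ^ n • ⊤ ⊓ Q ≤ a • Q :=
      (inf_le_inf_left _ (Submodule.smul_le_self_of_tower _ N)).trans
        (hn.trans_eq (by rw [pow_succ', mul_smul]))
    have himage : Module.supportDim R (Q.map (a ^ n • (⊤ : Submodule R M)).mkQ) < l.length := by
      refine ih hl.2 (hM.quotSMulTop n) ?_
      rintro _ ⟨_, ⟨y, hy, rfl⟩, rfl⟩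
      exact hc y (hN y hy) n
    have hQ : Module.supportDim R Q ≤ l.length :=
      (supportDim_le_supportDim_quotSMulTop_add_one hl.1).trans
        (ENat.WithBot.add_one_le_natCast_iff.2
          ((supportDim_quotSMulTop_le_of_smul_top_inf_le hinf).trans_lt himage))
    have hquot : Module.supportDim R (QuotSMulTop a M) ≤ l.length :=
      IsMultiplicitySystem.supportDim_le_length hl.2 (pow_one a ▸ hM.quotSMulTop 1)
    refine (supportDim_le_max_pow_smul_quotSMulTop N a c).trans_lt
      ((max_le hQ hquot).trans_lt ?_)
    exact_mod_cast Nat.lt_succ_self l.length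

end SupportDim

section LimitClosure

variable {R : Type*} [CommRing R] {M : Type*} [AddCommGroup M] [Module R M]

lemma powIdeal_ofFn {r : ℕ} (x : Fin r → R) (k : ℕ) :
    powIdeal (List.ofFn x) k = Ideal.span (Set.range fun i => x i ^ k) := by
  simp [powIdeal, Ideal.ofList, List.map_ofFn, List.mem_ofFn, Set.range]

lemma mem_limitClosure_iff {r : ℕ} {x : Fin r → R} {m : M} :
    m ∈ limitClosure x ↔ MemLimClosure (List.ofFn x) 1 m := by
  have hmono : Monotone fun n : ℕ =>
      (Ideal.span (Set.range fun i => x i ^ (n + 2)) • (⊤ : Submodule R M)).comap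
        (LinearMap.lsmul R M ((∏ i, x i) ^ (n + 1))) := by
    refine monotone_nat_of_le_succ fun n y hy => ?_
    simp only [Submodule.mem_comap, LinearMap.lsmul_apply, ← powIdeal_ofFn,
      ← List.prod_ofFn] at hy ⊢
    have h := prod_pow_smul_mem_powIdeal_smul_top hy 1
    rwa [smul_smul, pow_one, ← pow_succ', add_right_comm] at h
  rw [limitClosure, Submodule.mem_iSup_of_directed _ hmono.directed_le]
  simp only [Submodule.mem_comap, LinearMap.lsmul_apply, ← powIdeal_ofFn, ← List.prod_ofFn]
  constructor
  · rintro ⟨n, hn⟩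
    exact ⟨n + 1, by rwa [show 1 + (n + 1) = n + 2 by omega]⟩
  · rintro ⟨s, hs⟩
    refine ⟨s, ?_⟩
    have h := prod_pow_smul_mem_powIdeal_smul_top hs 1
    rwa [smul_smul, pow_one, ← pow_succ', show 1 + s + 1 = s + 2 by omega] at h

lemma memLimClosure_of_mem_limitClosure_pow {r n : ℕ} {x : Fin r → R} {m : M}
    (hm : m ∈ limitClosure fun i => x i ^ n) : MemLimClosure (List.ofFn x) n m := by
  obtain ⟨s, hs⟩ := mem_limitClosure_iff.1 hm
  refine ⟨n * s, ?_⟩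
  simpa only [powIdeal_ofFn, List.prod_ofFn, Finset.prod_pow, ← pow_mul, mul_add, mul_one] using hs

end LimitClosure

theorem intersection_limitClosure_eq_unmixed_component_general {R : Type u} [CommRing R]
    [IsNoetherianRing R] {M : Type v} [AddCommGroup M] [Module R M] [Module.Finite R M] {d : ℕ}
    {x : Fin d → R} (hx : ∀ i, x i ∈ Ring.jacobson R)
    (hM : IsFiniteLength R (M ⧸ Ideal.span (Set.range x) • (⊤ : Submodule R M))) :
    IsGreatest {V : Submodule R M | moduleDim R V < d}
      (⨅ n : ℕ, limitClosure fun i => x i ^ (n + 1)) := by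
  have hspan : Ideal.ofList (List.ofFn x) = Ideal.span (Set.range x) := by
    simpa using powIdeal_ofFn x 1
  constructor
  · have h := (isMultiplicitySystem_of_isFiniteLength (hspan ▸ hM))
      |>.supportDim_lt_length_of_forall_memLimClosure (by simpa using hx)
        (N := ⨅ n : ℕ, limitClosure fun i => x i ^ (n + 1)) fun y hy k =>
          (memLimClosure_of_mem_limitClosure_pow ((Submodule.mem_iInf _).1 hy k)).mono k.le_succ
    rwa [List.length_ofFn, Module.supportDim_eq_ringKrullDim_quotient_annihilator] at h
  · refine fun V hV => le_iInf fun n y hy => mem_limitClosure_iff.2 ?_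
    refine memLimClosure_one_of_ringKrullDim_lt (I := Module.annihilator R V)
      (by rwa [List.length_ofFn]) fun r hr => ?_
    exact congrArg Subtype.val (Module.mem_annihilator.1 hr ⟨y, hy⟩)

/-- **Theorem A**: for a system of parameters `x` of a `d`-dimensional finitely generated
module `M` over a Noetherian local ring, `⋂_{n>0} (x₁^n, …, x_d^n)^lim_M = U_M(0)`, where
`U_M(0)` is the unmixed component of `M`, i.e. the largest submodule of `M` of dimension
strictly less than `d`. -/
theorem intersection_limitClosure_eq_unmixed_component
    {R : Type*} [CommRing R] [IsNoetherianRing R] [IsLocalRing R]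
    {M : Type*} [AddCommGroup M] [Module R M] [Module.Finite R M]
    {d : ℕ} (hd : moduleDim R M = d)
    (x : Fin d → R) (hx : IsSystemOfParameters M x)
    (U : Submodule R M) (hUdim : moduleDim R U < (d : WithBot ℕ∞))
    (hUmax : ∀ N : Submodule R M, moduleDim R N < (d : WithBot ℕ∞) → N ≤ U) :
    (⨅ n : ℕ, limitClosure (M := M) (fun i => x i ^ (n + 1))) = U :=
  (intersection_limitClosure_eq_unmixed_component_general
    (fun i => IsLocalRing.ringJacobson_eq_maximalIdeal R ▸ hx.1 i) hx.2).unique ⟨hUdim, hUmax⟩
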